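/- Let n ≥ 4 and let φ : ℝⁿ → ℝⁿ be a continuous, non-degenerate coherency preserver for the form q(x₁,…,xₙ) = xₙ² − (x₁² + ⋯ + x_{n−1}²). Then there exists a point a ∈ ℝⁿ that is generic for φ (the preimage φ⁻¹({φ(a)}) has empty interior) and such that the induced map φ_a : 𝒬 → 𝒬 is nonconstant, i.e., there exist p, p′ ∈ 𝒬 with φ_a(p) ≠ φ_a(p′). -/

import Mathlib

/-!
Call a point `x` *flat* if `φ` maps its light cone `C(x)` into a null line, i.e. to pairwise coherent
points. If the induced map at `a` is constant then `a` is flat, so it suffices to show that not all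
generic points are flat. Suppose they are.

* The values of non-generic points form a countable set, because their fibres have disjoint
  nonempty interiors. Non-flatness is an open condition, so near a non-flat point the map `φ` takes
  only countably many values and is therefore locally constant (`eventually_eq_of_not_flat`).
* Two light cones always meet. If `φ u` and `φ w` are not coherent, every point of `C(u) ∩ C(w)` is
  non-flat. Along a null segment not collapsed by `φ` there are uncountably many values, hence
  generic, and so flat, points.
* For every `d`, only countably many null lines through `d` contain the image of a non-collapsed
  null segment issuing from a point of `φ⁻¹(d)` (`countable_directions`).
* If `φ z`, `φ w` are not coherent and `v ∈ C(z) ∩ C(w)`, let `ℓ` be the null line through `φ z` and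
  `φ v`. By the previous points `φ⁻¹(ℓ \ {φ v})` is open (`isOpen_punctured`).
* Non-degeneracy at `φ v` yields a second such configuration with the same line `ℓ` but another
  puncture. Hence `φ⁻¹(ℓ)` is open; being closed and nonempty it is everything, so `φ` is
  degenerate, a contradiction (`AllFlat.false`).

Null lines are encoded throughout as the sets of points coherent to two given distinct coherent
points (`Coh.of_pair`).
-/

/-- The standard Minkowski quadratic form
`q(x₁,…,xₙ) = xₙ² − (x₁² + ⋯ + x_{n−1}²)` on `ℝⁿ`. -/
noncomputable def mq (n : ℕ) (x : Fin n → ℝ) : ℝ :=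
  ∑ i : Fin n, (if (i : ℕ) = n - 1 then (1 : ℝ) else -1) * x i ^ 2

/-- The set `𝒬 = {(x₁,…,x_{n−1},1) : x₁² + ⋯ + x_{n−1}² = 1}` in `ℝⁿ`. -/
def QSet (n : ℕ) : Set (Fin n → ℝ) :=
  {p | (∀ i : Fin n, (i : ℕ) = n - 1 → p i = 1) ∧
       (∑ i : Fin n, if (i : ℕ) = n - 1 then 0 else p i ^ 2) = 1}

/-- `ψ` restricted to `𝒬` is the map `φ_a` induced by `φ` at the point `a`:
it sends `𝒬` into `𝒬` and `φ` maps the coherent line `a + ℝ·p` into the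
coherent line `φ(a) + ℝ·ψ(p)`. -/
def IsInducedMap (n : ℕ) (φ : (Fin n → ℝ) → (Fin n → ℝ)) (a : Fin n → ℝ)
    (ψ : (Fin n → ℝ) → (Fin n → ℝ)) : Prop :=
  ∀ p ∈ QSet n, ψ p ∈ QSet n ∧ ∀ t : ℝ, ∃ s : ℝ, φ (a + t • p) = φ a + s • ψ p

/-! ### Geometry of the Minkowski form -/

/-- Two points are coherent if their difference is a null vector. -/
def Coh (n : ℕ) (x y : Fin n → ℝ) : Prop := mq n (y - x) = 0

theorem mq_succ (m : ℕ) (x : Fin (m + 1) → ℝ) :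
    mq (m + 1) x = x (Fin.last m) ^ 2 - ∑ i : Fin m, x i.castSucc ^ 2 := by
  have h : ∀ i : Fin m, (i : ℕ) ≠ m := fun i => i.isLt.ne
  simp [mq, Fin.sum_univ_castSucc, h]
  ring

theorem mq_smul (n : ℕ) (t : ℝ) (x : Fin n → ℝ) : mq n (t • x) = t ^ 2 * mq n x := by
  simp only [mq, Finset.mul_sum, Pi.smul_apply, smul_eq_mul]
  exact Finset.sum_congr rfl fun i _ => by ring

theorem mq_continuous (n : ℕ) : Continuous (mq n) := by
  unfold mq
  fun_prop

theorem eq_zero_of_mq_of_last {m : ℕ} {a : Fin (m + 1) → ℝ} (ha : mq (m + 1) a = 0)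
    (h : a (Fin.last m) = 0) : a = 0 := by
  rw [mq_succ, h] at ha
  have h0 : ∑ i : Fin m, a i.castSucc ^ 2 = 0 := by linarith
  rw [Finset.sum_eq_zero_iff_of_nonneg fun i _ => sq_nonneg _] at h0
  funext i
  refine Fin.lastCases h (fun j => ?_) i
  simpa using h0 j (Finset.mem_univ _)

/-- Equality case of the Cauchy–Schwarz inequality: totally isotropic subspaces have
dimension at most one. -/
theorem exists_smul_of_null {m : ℕ} {a b : Fin (m + 1) → ℝ} (ha0 : a ≠ 0)
    (ha : mq (m + 1) a = 0) (hb : mq (m + 1) b = 0) (hab : mq (m + 1) (b - a) = 0) :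
    b = (b (Fin.last m) / a (Fin.last m)) • a := by
  have hl : a (Fin.last m) ≠ 0 := fun h => ha0 (eq_zero_of_mq_of_last ha h)
  set c := b (Fin.last m) / a (Fin.last m) with hc
  have hcl : c * a (Fin.last m) = b (Fin.last m) := by rw [hc]; field_simp
  rw [← sub_eq_zero]
  refine eq_zero_of_mq_of_last ?_ (by simp [hcl])
  rw [mq_succ] at *
  have e1 : ∑ i : Fin m, (b - a) i.castSucc ^ 2 = ∑ i : Fin m, b i.castSucc ^ 2
      - 2 * ∑ i : Fin m, a i.castSucc * b i.castSucc + ∑ i : Fin m, a i.castSucc ^ 2 := by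
    rw [Finset.mul_sum, ← Finset.sum_sub_distrib, ← Finset.sum_add_distrib]
    exact Finset.sum_congr rfl fun i _ => by simp; ring
  have e2 : ∑ i : Fin m, (b - c • a) i.castSucc ^ 2 = ∑ i : Fin m, b i.castSucc ^ 2
      - 2 * c * ∑ i : Fin m, a i.castSucc * b i.castSucc
      + c ^ 2 * ∑ i : Fin m, a i.castSucc ^ 2 := by
    rw [Finset.mul_sum, Finset.mul_sum, ← Finset.sum_sub_distrib, ← Finset.sum_add_distrib]
    exact Finset.sum_congr rfl fun i _ => by simp; ring
  rw [e1] at hab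
  rw [e2]
  simp only [Pi.sub_apply, Pi.smul_apply, smul_eq_mul] at hab ⊢
  linear_combination hb - c * (hb + ha - hab) + c ^ 2 * ha

/-- Polar decomposition in `ℝᵐ`, `m ≥ 1`: also the zero vector is a multiple of a unit vector. -/
theorem exists_unit_smul {m : ℕ} (hm : 0 < m) (s : Fin m → ℝ) :
    ∃ (r : ℝ) (e : Fin m → ℝ), ∑ i, e i ^ 2 = 1 ∧ s = r • e := by
  by_cases hs : ∑ i, s i ^ 2 = 0
  · refine ⟨0, Pi.single ⟨0, hm⟩ 1, ?_, ?_⟩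
    · rw [Finset.sum_eq_single ⟨0, hm⟩] <;> simp +contextual
    · rw [Finset.sum_eq_zero_iff_of_nonneg fun i _ => sq_nonneg _] at hs
      funext i
      simpa using hs i (Finset.mem_univ _)
  · have hpos : 0 < ∑ i, s i ^ 2 :=
      lt_of_le_of_ne (Finset.sum_nonneg fun i _ => sq_nonneg _) (Ne.symm hs)
    have hr : √(∑ i, s i ^ 2) ≠ 0 := (Real.sqrt_pos.2 hpos).ne'
    refine ⟨√(∑ i, s i ^ 2), (√(∑ i, s i ^ 2))⁻¹ • s, ?_, ?_⟩
    · simp only [Pi.smul_apply, smul_eq_mul, mul_pow, ← Finset.mul_sum, inv_pow,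
        Real.sq_sqrt hpos.le]
      exact inv_mul_cancel₀ hs
    · rw [smul_inv_smul₀ hr]

/-- Every vector is a sum of two null vectors. -/
theorem exists_null_decomp {m : ℕ} (hm : 0 < m) (x : Fin (m + 1) → ℝ) :
    ∃ z, mq (m + 1) z = 0 ∧ mq (m + 1) (x - z) = 0 := by
  obtain ⟨r, e, he, hs⟩ := exists_unit_smul hm fun i => x i.castSucc
  -- With `x = (r e, τ)`, the summands are `(τ + r) / 2 • (e, 1)` and `(τ - r) / 2 • (-e, 1)`.
  refine ⟨((x (Fin.last m) + r) / 2) • Fin.snoc (α := fun _ => ℝ) e 1, ?_, ?_⟩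
  · rw [mq_smul, mq_succ]
    simp [he]
  · rw [mq_succ]
    have h : ∀ i : Fin m, x i.castSucc = r * e i := fun i => congrFun hs i
    have h2 : ∀ i : Fin m, (r * e i - (x (Fin.last m) + r) / 2 * e i) ^ 2
        = (r - (x (Fin.last m) + r) / 2) ^ 2 * e i ^ 2 := fun i => by ring
    simp only [Pi.sub_apply, Pi.smul_apply, smul_eq_mul, Fin.snoc_last, Fin.snoc_castSucc, h, h2,
      ← Finset.mul_sum, he]
    ring

theorem QSet_succ (m : ℕ) (p : Fin (m + 1) → ℝ) :
    p ∈ QSet (m + 1) ↔ p (Fin.last m) = 1 ∧ ∑ i : Fin m, p i.castSucc ^ 2 = 1 := by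
  have h : ∀ i : Fin m, (i : ℕ) ≠ m := fun i => i.isLt.ne
  simp [QSet, Fin.sum_univ_castSucc, h, Fin.forall_fin_succ']

theorem exists_QSet_smul {m : ℕ} (hm : 0 < m) {a : Fin (m + 1) → ℝ} (ha : mq (m + 1) a = 0) :
    ∃ p ∈ QSet (m + 1), ∃ t : ℝ, a = t • p := by
  by_cases h : a (Fin.last m) = 0
  · obtain ⟨-, e, he, -⟩ := exists_unit_smul hm 0
    exact ⟨Fin.snoc (α := fun _ => ℝ) e 1, by simp [QSet_succ, he], 0,
      by simp [eq_zero_of_mq_of_last ha h]⟩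
  · refine ⟨(a (Fin.last m))⁻¹ • a, ?_, a (Fin.last m), by rw [smul_inv_smul₀ h]⟩
    rw [mq_succ] at ha
    have ha' : ∑ i : Fin m, a i.castSucc ^ 2 = a (Fin.last m) ^ 2 := by linarith
    rw [QSet_succ]
    simp only [Pi.smul_apply, smul_eq_mul, mul_pow, ← Finset.mul_sum, ha']
    constructor <;> field_simp

theorem Coh.refl {n : ℕ} (x : Fin n → ℝ) : Coh n x x := by simp [Coh, mq]

theorem Coh.symm {n : ℕ} {x y : Fin n → ℝ} (h : Coh n x y) : Coh n y x := by
  have h' := mq_smul n (-1) (y - x)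
  rw [neg_one_smul, neg_sub] at h'
  rw [Coh] at h ⊢
  rw [h', h, mul_zero]

theorem coh_add_right {n : ℕ} (x y z : Fin n → ℝ) : Coh n (x + z) (y + z) ↔ Coh n x y := by
  simp [Coh]

/-- If `a ≠ b` are coherent, the points coherent to both form the null line through `a` and `b`;
in particular they are pairwise coherent. -/
theorem Coh.of_pair {m : ℕ} {a b x y : Fin (m + 1) → ℝ} (hne : a ≠ b) (hab : Coh (m + 1) a b)
    (hax : Coh (m + 1) a x) (hbx : Coh (m + 1) b x) (hay : Coh (m + 1) a y)
    (hby : Coh (m + 1) b y) : Coh (m + 1) x y := by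
  have h0 : b - a ≠ 0 := sub_ne_zero.2 hne.symm
  have hx := exists_smul_of_null h0 hab hax (by simpa [Coh] using hbx)
  have hy := exists_smul_of_null h0 hab hay (by simpa [Coh] using hby)
  have hxy : y - x = (y - a) - (x - a) := by abel
  rw [Coh, hxy, hx, hy, ← sub_smul, mq_smul, show mq (m + 1) (b - a) = 0 from hab, mul_zero]

theorem exists_coh_coh {m : ℕ} (hm : 0 < m) (x y : Fin (m + 1) → ℝ) :
    ∃ v, Coh (m + 1) x v ∧ Coh (m + 1) y v := by
  obtain ⟨z, hz, hz'⟩ := exists_null_decomp hm (y - x)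
  refine ⟨x + z, by simpa [Coh] using hz, Coh.symm ?_⟩
  rwa [Coh, ← sub_sub]

/-- The direction of `x` as seen from `d`, normalised to have last coordinate `1`; it takes the
junk value `0` where the last coordinate of `x - d` vanishes. -/
noncomputable def dirFrom {m : ℕ} (d x : Fin (m + 1) → ℝ) : Fin (m + 1) → ℝ :=
  ((x - d) (Fin.last m))⁻¹ • (x - d)

theorem last_ne_zero {m : ℕ} {d x : Fin (m + 1) → ℝ} (hx : x ≠ d) (hdx : Coh (m + 1) d x) :
    (x - d) (Fin.last m) ≠ 0 :=
  fun h => hx (sub_eq_zero.1 (eq_zero_of_mq_of_last hdx h))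

theorem dirFrom_eq {m : ℕ} {d x y : Fin (m + 1) → ℝ} (hx : x ≠ d) (hy : y ≠ d)
    (hdx : Coh (m + 1) d x) (hdy : Coh (m + 1) d y) (hxy : Coh (m + 1) x y) :
    dirFrom d x = dirFrom d y := by
  have h := exists_smul_of_null (sub_ne_zero.2 hx) hdx hdy (by simpa [Coh] using hxy)
  have h1 := last_ne_zero hx hdx
  have h2 := last_ne_zero hy hdy
  calc dirFrom d x
      = ((y - d) (Fin.last m))⁻¹ • (((y - d) (Fin.last m) / (x - d) (Fin.last m)) • (x - d)) := by
        rw [smul_smul, dirFrom]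
        congr 1
        field_simp
    _ = dirFrom d y := by rw [← h, dirFrom]

theorem coh_of_dirFrom_eq {m : ℕ} {d x y : Fin (m + 1) → ℝ} (hy : y ≠ d)
    (hdx : Coh (m + 1) d x) (hdy : Coh (m + 1) d y) (h : dirFrom d x = dirFrom d y) :
    Coh (m + 1) x y := by
  have h2 := last_ne_zero hy hdy
  have e : y - d = ((y - d) (Fin.last m)) • dirFrom d x := by
    rw [h, dirFrom, smul_inv_smul₀ h2]
  have e' : y - x = (y - d) - (x - d) := by abel
  have e'' : y - x = ((y - d) (Fin.last m) * ((x - d) (Fin.last m))⁻¹ - 1) • (x - d) := by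
    rw [sub_smul, one_smul, mul_smul, ← dirFrom, ← e, e']
  rw [Coh, e'', mq_smul, show mq (m + 1) (x - d) = 0 from hdx, mul_zero]

/-! ### Flat points and countability -/

/-- `φ` maps the light cone of `x` to pairwise coherent points, that is, into a null line. -/
def Flat (m : ℕ) (φ : (Fin (m + 1) → ℝ) → (Fin (m + 1) → ℝ)) (x : Fin (m + 1) → ℝ) : Prop :=
  ∀ b c, Coh (m + 1) x b → Coh (m + 1) x c → Coh (m + 1) (φ b) (φ c)

/-- The values whose fibre has nonempty interior; `a` is generic iff `φ a` is not among them. -/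
def fatValues {m : ℕ} (φ : (Fin (m + 1) → ℝ) → (Fin (m + 1) → ℝ)) : Set (Fin (m + 1) → ℝ) :=
  {d | (interior (φ ⁻¹' {d})).Nonempty}

/-- The situation to be refuted: a continuous non-degenerate coherency preserver all of whose
generic points are flat. -/
structure AllFlat (m : ℕ) (φ : (Fin (m + 1) → ℝ) → (Fin (m + 1) → ℝ)) : Prop where
  pos : 0 < m
  cont : Continuous φ
  pres : ∀ a b, Coh (m + 1) a b → Coh (m + 1) (φ a) (φ b)
  nondeg : ∀ s, ∃ x, ¬ Coh (m + 1) s (φ x)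
  flat : ∀ a, φ a ∉ fatValues φ → Flat m φ a

theorem countable_fatValues {m : ℕ} (φ : (Fin (m + 1) → ℝ) → (Fin (m + 1) → ℝ)) :
    (fatValues φ).Countable := by
  refine Set.PairwiseDisjoint.countable_of_nonempty_interior (s := fun d => φ ⁻¹' {d}) ?_
    fun d hd => hd
  intro d _ d' _ hne
  exact Disjoint.preimage _ (by simpa using hne)

namespace AllFlat

variable {m : ℕ} {φ : (Fin (m + 1) → ℝ) → (Fin (m + 1) → ℝ)}

/-- A null segment on which `φ` is not constant has uncountable image, so it contains points whose
values avoid a given countable set. -/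
theorem exists_segment (H : AllFlat m φ) {y z : Fin (m + 1) → ℝ} (hyz : Coh (m + 1) y z)
    (hne : φ y ≠ φ z) {S : Set (Fin (m + 1) → ℝ)} (hS : S.Countable) :
    ∃ u, Coh (m + 1) u y ∧ Coh (m + 1) u z ∧ φ u ∉ S := by
  by_contra! hcon
  have hc : IsPreconnected ((fun t : ℝ => φ (y + t • (z - y))) '' Set.univ) := by
    refine isPreconnected_univ.image _ (Continuous.continuousOn ?_)
    have := H.cont
    fun_prop
  have hsub : ((fun t : ℝ => φ (y + t • (z - y))) '' Set.univ) ⊆ S := by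
    rintro _ ⟨t, -, rfl⟩
    refine hcon _ (Coh.symm ?_) ?_
    · rw [Coh, add_sub_cancel_left, mq_smul, show mq (m + 1) (z - y) = 0 from hyz, mul_zero]
    · have e : z - (y + t • (z - y)) = (1 - t) • (z - y) := by
        rw [sub_smul, one_smul]; abel
      rw [Coh, e, mq_smul, show mq (m + 1) (z - y) = 0 from hyz, mul_zero]
  refine hne (hS.isTotallyDisconnected _ hsub hc ⟨0, trivial, ?_⟩ ⟨1, trivial, ?_⟩) <;> simp

theorem mem_fatValues_of_not_flat (H : AllFlat m φ) {v : Fin (m + 1) → ℝ} (hv : ¬ Flat m φ v) :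
    φ v ∈ fatValues φ := by
  by_contra h
  exact hv (H.flat v h)

/-- Being non-flat is an open condition, and non-flat points only take countably many values. -/
theorem eventually_eq_of_not_flat (H : AllFlat m φ) {v : Fin (m + 1) → ℝ} (hv : ¬ Flat m φ v) :
    ∀ᶠ v' in nhds v, φ v' = φ v := by
  have hopen : ∀ᶠ v' in nhds v, ¬ Flat m φ v' := by
    unfold Flat at hv
    push Not at hv
    obtain ⟨b, c, hb, hc, hbc⟩ := hv
    have hcont : Continuous fun v' =>
        mq (m + 1) (φ (c + (v' - v)) - φ (b + (v' - v))) := by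
      have h1 := H.cont
      have h2 := mq_continuous (m + 1)
      fun_prop
    have hne : ∀ᶠ v' in nhds v, mq (m + 1) (φ (c + (v' - v)) - φ (b + (v' - v))) ≠ 0 :=
      hcont.continuousAt.eventually_ne (by simpa [Coh] using hbc)
    filter_upwards [hne] with v' hv' hflat
    refine hv' (hflat _ _ ?_ ?_)
    · have := (coh_add_right v b (v' - v)).2 hb
      rwa [add_sub_cancel] at this
    · have := (coh_add_right v c (v' - v)).2 hc
      rwa [add_sub_cancel] at this
  obtain ⟨ε, hε, hball⟩ := Metric.eventually_nhds_iff_ball.1 hopen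
  have hc : IsPreconnected (φ '' Metric.ball v ε) :=
    (convex_ball v ε).isPreconnected.image _ H.cont.continuousOn
  have hs : φ '' Metric.ball v ε ⊆ fatValues φ := by
    rintro _ ⟨x, hx, rfl⟩
    exact H.mem_fatValues_of_not_flat (hball x hx)
  have hsub := (countable_fatValues φ).isTotallyDisconnected _ hs hc
  filter_upwards [Metric.ball_mem_nhds v hε] with x hx
  exact hsub ⟨x, hx, rfl⟩ ⟨v, Metric.mem_ball_self hε, rfl⟩

/-- Only countably many null lines through `d` contain the image of a null segment issuing from
a point of `φ⁻¹(d)` and not collapsed at its ends. Fix `w` with `φ w` not coherent to `d`. Each such line contains the value of a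
generic point `u`, hence all of `φ (C(u))`; a point `v` of `C(u) ∩ C(w)` is non-flat, so its
value on the line is different from `d` and one of countably many. -/
theorem countable_directions (H : AllFlat m φ) (d : Fin (m + 1) → ℝ) :
    {p | ∃ z y, Coh (m + 1) z y ∧ φ z = d ∧ φ y ≠ d ∧ dirFrom d (φ y) = p}.Countable := by
  obtain ⟨w, hw⟩ := H.nondeg d
  refine ((countable_fatValues φ).image (dirFrom d)).mono ?_
  rintro _ ⟨z, y, hzy, rfl, hy, rfl⟩
  have hzy' := H.pres _ _ hzy
  -- `φ w` is coherent to at most one point of the null line through `φ z` and `φ y`.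
  have hone :
      {x | Coh (m + 1) (φ z) x ∧ Coh (m + 1) (φ y) x ∧ Coh (m + 1) (φ w) x}.Subsingleton := by
    rintro a ⟨ha1, ha2, ha3⟩ b ⟨hb1, hb2, hb3⟩
    by_contra hab
    exact hw (Coh.of_pair hab (Coh.of_pair hy.symm hzy' ha1 ha2 hb1 hb2) ha1.symm hb1.symm
      ha3.symm hb3.symm)
  obtain ⟨u, huz, huy, hu⟩ := H.exists_segment hzy hy.symm
    (((countable_fatValues φ).union hone.countable).union (Set.countable_singleton (φ z)))
  simp only [Set.mem_union, Set.mem_singleton_iff, Set.mem_ofPred_eq, not_or] at hu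
  obtain ⟨⟨hu1, hu2⟩, hu3⟩ := hu
  have huz' := H.pres _ _ huz
  have huy' := H.pres _ _ huy
  have huw : ¬ Coh (m + 1) (φ w) (φ u) := fun h => hu2 ⟨huz'.symm, huy'.symm, h⟩
  obtain ⟨v, huv, hwv⟩ := exists_coh_coh H.pos u w
  have hv : ¬ Flat m φ v := fun h => huw (h _ _ hwv.symm huv.symm)
  have hvz : φ v ≠ φ z := fun h => hw (h ▸ (H.pres _ _ hwv).symm)
  refine ⟨φ v, H.mem_fatValues_of_not_flat hv, ?_⟩
  have hzv : Coh (m + 1) (φ z) (φ v) := H.flat u hu1 _ _ huz huv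
  rw [dirFrom_eq hvz hu3 hzv huz'.symm (H.pres _ _ huv).symm,
    dirFrom_eq hu3 hy huz'.symm hzy' huy']

/-- Suppose `φ z`, `φ w` are not coherent and `v ∈ C(z) ∩ C(w)`. Then the preimage of the null line
through `φ z` and `φ v`, punctured at `φ v`, is open: each of its points `x` is coherent to some
non-flat point with value `φ v`, so all points near `x` are coherent to points with value `φ v`
and `countable_directions` forces their values to stay on the line. -/
theorem isOpen_punctured (H : AllFlat m φ) {z w v : Fin (m + 1) → ℝ}
    (hzw : ¬ Coh (m + 1) (φ z) (φ w)) (hzv : Coh (m + 1) z v) (hwv : Coh (m + 1) w v) :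
    IsOpen {x | Coh (m + 1) (φ z) (φ x) ∧ Coh (m + 1) (φ v) (φ x) ∧ φ x ≠ φ v} := by
  have hzv' := H.pres _ _ hzv
  have hwv' := H.pres _ _ hwv
  have hzne : φ z ≠ φ v := fun h => hzw (h ▸ hwv'.symm)
  have hwne : φ w ≠ φ v := fun h => hzw (h ▸ hzv')
  obtain ⟨g, hgw, hgv, hg⟩ := H.exists_segment hwv hwne
    ((countable_fatValues φ).union (Set.countable_singleton (φ v)))
  simp only [Set.mem_union, Set.mem_singleton_iff, not_or] at hg
  obtain ⟨hg1, hg2⟩ := hg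
  have hgw' := H.pres _ _ hgw
  have hgv' := H.pres _ _ hgv
  rw [isOpen_iff_mem_nhds]
  rintro x ⟨hzx, hvx, hxv⟩
  have hgx : ¬ Coh (m + 1) (φ g) (φ x) := fun h =>
    -- Otherwise `φ x ≠ φ v` lies on both null lines through `φ v`, which then coincide.
    hzw (Coh.of_pair hxv hvx.symm hzx.symm hzv'.symm
      (Coh.of_pair hg2 hgv' h hvx hgw' hwv'.symm) hwv'.symm)
  obtain ⟨c, hxc, hgc⟩ := exists_coh_coh H.pos x g
  have hcflat : ¬ Flat m φ c := fun h => hgx (h _ _ hgc.symm hxc.symm)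
  have hxc' := H.pres _ _ hxc
  have hcv : φ c = φ v := by
    by_contra hne
    have hvc : Coh (m + 1) (φ v) (φ c) := H.flat g hg1 _ _ hgv hgc
    exact hgx (Coh.of_pair hne hvc.symm (H.pres _ _ hgc).symm hgv'.symm hxc'.symm hvx)
  have hev : ∀ᶠ x' in nhds x, φ (c + (x' - x)) = φ v := by
    have ht : Filter.Tendsto (fun x' => c + (x' - x)) (nhds x) (nhds c) := by
      have : Continuous fun x' : Fin (m + 1) → ℝ => c + (x' - x) := by fun_prop
      simpa using this.tendsto x
    have := ht.eventually (H.eventually_eq_of_not_flat hcflat)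
    rwa [hcv] at this
  obtain ⟨ε, hε, hball⟩ := Metric.eventually_nhds_iff_ball.1
    (hev.and (H.cont.continuousAt.eventually_ne hxv))
  have hcohc : ∀ x', Coh (m + 1) (c + (x' - x)) x' := fun x' => by
    have := (coh_add_right c x (x' - x)).2 hxc.symm
    rwa [add_sub_cancel] at this
  have hcohv : ∀ x' ∈ Metric.ball x ε, Coh (m + 1) (φ v) (φ x') := fun x' hx' => by
    have := H.pres _ _ (hcohc x')
    rwa [(hball x' hx').1] at this
  have hconn : IsPreconnected ((fun x' => dirFrom (φ v) (φ x')) '' Metric.ball x ε) := by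
    refine (convex_ball x ε).isPreconnected.image _ ?_
    have h1 := H.cont
    refine ContinuousOn.smul (ContinuousOn.inv₀ ?_ fun x' hx' =>
      last_ne_zero (hball x' hx').2 (hcohv x' hx')) ?_
    · exact Continuous.continuousOn (by fun_prop)
    · exact Continuous.continuousOn (by fun_prop)
  have hsub := (H.countable_directions (φ v)).isTotallyDisconnected _ (by
    rintro _ ⟨x', hx', rfl⟩
    exact ⟨c + (x' - x), x', hcohc x', (hball x' hx').1, (hball x' hx').2, rfl⟩) hconn
  filter_upwards [Metric.ball_mem_nhds x hε] with x' hx'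
  have hxx' : Coh (m + 1) (φ x) (φ x') :=
    coh_of_dirFrom_eq (hball x' hx').2 hvx (hcohv x' hx')
      (hsub ⟨x, Metric.mem_ball_self hε, rfl⟩ ⟨x', hx', rfl⟩)
  exact ⟨Coh.of_pair hxv hvx.symm hzx.symm hzv'.symm hxx' (hcohv x' hx'),
    hcohv x' hx', (hball x' hx').2⟩

/-- The preimage of a suitable null line is clopen: it is closed by continuity, and open as a
union of two punctured preimages with different punctures. -/
theorem false (H : AllFlat m φ) : False := by
  obtain ⟨w, hzw⟩ := H.nondeg (φ 0)
  set z : Fin (m + 1) → ℝ := 0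
  obtain ⟨v, hzv, hwv⟩ := exists_coh_coh H.pos z w
  have hzv' := H.pres _ _ hzv
  have hzne : φ z ≠ φ v := fun h => hzw (h ▸ (H.pres _ _ hwv).symm)
  obtain ⟨u, hu⟩ := H.nondeg (φ v)
  have hone :
      {x | Coh (m + 1) (φ z) x ∧ Coh (m + 1) (φ v) x ∧ Coh (m + 1) (φ u) x}.Subsingleton := by
    rintro a ⟨ha1, ha2, ha3⟩ b ⟨hb1, hb2, hb3⟩
    by_contra hab
    exact hu (Coh.of_pair hab (Coh.of_pair hzne hzv' ha1 ha2 hb1 hb2) ha2.symm hb2.symm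
      ha3.symm hb3.symm)
  obtain ⟨g, hgz, hgv, hg⟩ := H.exists_segment hzv hzne
    (((countable_fatValues φ).union hone.countable).union (Set.countable_singleton (φ v)))
  simp only [Set.mem_union, Set.mem_singleton_iff, Set.mem_ofPred_eq, not_or] at hg
  obtain ⟨⟨hg1, hg2⟩, hg3⟩ := hg
  have hgz' := H.pres _ _ hgz
  have hgv' := H.pres _ _ hgv
  have hgu : ¬ Coh (m + 1) (φ g) (φ u) := fun h => hg2 ⟨hgz'.symm, hgv'.symm, h.symm⟩
  obtain ⟨c, hgc, huc⟩ := exists_coh_coh H.pos g u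
  have hgc' := H.pres _ _ hgc
  have huc' := H.pres _ _ huc
  have hcv : φ c ≠ φ v := fun h => hu (h ▸ huc'.symm)
  have hgne : φ g ≠ φ c := fun h => hgu (h ▸ huc'.symm)
  have hvc : Coh (m + 1) (φ v) (φ c) := H.flat g hg1 _ _ hgv hgc
  have hzc : Coh (m + 1) (φ z) (φ c) := Coh.of_pair hg3 hgv' hgz' hzv'.symm hgc' hvc
  have hopen : IsOpen {x | Coh (m + 1) (φ z) (φ x) ∧ Coh (m + 1) (φ v) (φ x)} := by
    convert (H.isOpen_punctured hzw hzv hwv).union (H.isOpen_punctured hgu hgc huc) using 1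
    ext x
    simp only [Set.mem_union, Set.mem_ofPred_eq]
    constructor
    · rintro ⟨h1, h2⟩
      by_cases hx : φ x = φ v
      · right
        rw [hx]
        exact ⟨hgv', hvc.symm, hcv.symm⟩
      · exact Or.inl ⟨h1, h2, hx⟩
    · rintro (⟨h1, h2, -⟩ | ⟨h1, h2, -⟩)
      · exact ⟨h1, h2⟩
      · exact ⟨Coh.of_pair hgne hgc' hgz' hzc.symm h1 h2,
          Coh.of_pair hgne hgc' hgv' hvc.symm h1 h2⟩
  have hclosed : IsClosed {x | Coh (m + 1) (φ z) (φ x) ∧ Coh (m + 1) (φ v) (φ x)} := by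
    have h1 := H.cont
    have h2 := mq_continuous (m + 1)
    refine IsClosed.inter (isClosed_eq ?_ continuous_const) (isClosed_eq ?_ continuous_const) <;>
      fun_prop
  have huniv := IsClopen.eq_univ ⟨hclosed, hopen⟩ ⟨z, Coh.refl _, hzv'.symm⟩
  have hmem := Set.mem_univ u
  rw [← huniv] at hmem
  exact hu hmem.2

end AllFlat

theorem exists_generic_point_with_nonconstant_induced_map
    (n : ℕ) (hn : 4 ≤ n) (φ : (Fin n → ℝ) → (Fin n → ℝ))
    (hcont : Continuous φ)
    (hpres : ∀ a b : Fin n → ℝ, mq n (b - a) = 0 → mq n (φ b - φ a) = 0)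
    (hnd : ¬ ∃ s' : Fin n → ℝ, ∀ x : Fin n → ℝ, mq n (φ x - s') = 0) :
    ∃ a : Fin n → ℝ, interior (φ ⁻¹' {φ a}) = ∅ ∧
      ∀ ψ : (Fin n → ℝ) → (Fin n → ℝ), IsInducedMap n φ a ψ →
        ∃ p ∈ QSet n, ∃ p' ∈ QSet n, ψ p ≠ ψ p' := by
  by_contra! hcon
  obtain ⟨m, rfl⟩ : ∃ m, n = m + 1 := ⟨n - 1, by omega⟩
  refine AllFlat.false (m := m) (φ := φ) ⟨by omega, hcont, hpres, ?_, ?_⟩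
  · intro s
    by_contra! h
    exact hnd ⟨s, h⟩
  · intro a ha b c hb hc
    obtain ⟨ψ, hψ, hψc⟩ := hcon a (Set.not_nonempty_iff_eq_empty.1 ha)
    obtain ⟨p, hp, t, hpt⟩ := exists_QSet_smul (by omega) hb
    obtain ⟨p', hp', t', hpt'⟩ := exists_QSet_smul (by omega) hc
    obtain ⟨s, hs⟩ := (hψ p hp).2 t
    obtain ⟨s', hs'⟩ := (hψ p' hp').2 t'
    rw [← hpt, add_sub_cancel] at hs
    rw [← hpt', add_sub_cancel, ← hψc p hp p' hp'] at hs'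
    have hnull : mq (m + 1) (ψ p) = 0 := by
      have h := (QSet_succ m (ψ p)).1 (hψ p hp).1
      rw [mq_succ, h.1, h.2]
      norm_num
    rw [Coh, hs, hs', add_sub_add_left_eq_sub, ← sub_smul, mq_smul, hnull, mul_zero]
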